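/- For every delivery instance and every MMS allocation π, there exists an allocation π' that is both MMS and non-wasteful and satisfies cost(π'_i) ≤ cost(π_i) for every agent i. In particular, every delivery instance admits an allocation that is simultaneously MMS and non-wasteful. -/

import Mathlib

/-- A delivery instance: a finite tree rooted at the hub (encoded by a parent
function `par`; the edges of the tree are the pairs `{v, par v}` for `v ≠ hub`),
positive edge weights (`w v` is the weight of the edge between `v` and its
parent, for `v ≠ hub`), and `n` agents. -/
structure DeliveryInstance where
  V : Type
  fintypeV : Fintype V
  decEqV : DecidableEq V
  hub : V
  par : V → V
  w : V → ℝ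
  par_hub : par hub = hub
  reaches_hub : ∀ v : V, ∃ k : ℕ, par^[k] v = hub
  w_pos : ∀ v : V, v ≠ hub → 0 < w v
  n : ℕ
  n_pos : 0 < n

attribute [instance] DeliveryInstance.fintypeV DeliveryInstance.decEqV

namespace DeliveryInstance

variable (I : DeliveryInstance)

/-- `u` lies on the path from the hub to `v` (equivalently, `u` is a weak
ancestor of `v` in the tree rooted at the hub). -/
def Anc (u v : I.V) : Prop := ∃ k : ℕ, I.par^[k] v = u

/-- A leaf of the tree rooted at the hub: a vertex with no children. -/
def IsLeaf (v : I.V) : Prop := ∀ u : I.V, I.par u = v → u = v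

/-- The set of leaves of the topology. -/
def leaves : Set I.V := {v : I.V | I.IsLeaf v}

/-- The instance is unweighted if every edge has weight 1. -/
def Unweighted : Prop := ∀ v : I.V, v ≠ I.hub → I.w v = 1

/-- The cost of servicing a set `A` of orders: the total weight of the edges of
the tree that lie on the path from the hub to some vertex of `A` (the edge
between `u ≠ hub` and its parent lies on such a path iff `u` is a weak ancestor
of a member of `A`).  In particular `cost ∅ = 0`. -/
noncomputable def cost (A : Set I.V) : ℝ :=
  ∑ u : I.V, Set.indicator {u : I.V | u ≠ I.hub ∧ ∃ v ∈ A, I.Anc u v} I.w u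

/-- The bundle of agent `i` under allocation `π`: the set of orders serviced by `i`. -/
def bundle (π : I.V → Fin I.n) (i : Fin I.n) : Set I.V :=
  {v : I.V | v ≠ I.hub ∧ π v = i}

/-- An allocation is non-wasteful if every order `v` is serviced by an agent
that also services some leaf of the subtree rooted at `v`. -/
def NonWasteful (π : I.V → Fin I.n) : Prop :=
  ∀ v : I.V, v ≠ I.hub → ∃ l : I.V, I.IsLeaf l ∧ I.Anc v l ∧ π l = π v

/-- Total (utilitarian) cost of an allocation. -/
noncomputable def totalCost (π : I.V → Fin I.n) : ℝ :=
  ∑ i : Fin I.n, I.cost (I.bundle π i)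

/-- The maximum bundle cost of an allocation. -/
noncomputable def maxCost (π : I.V → Fin I.n) : ℝ :=
  Finset.univ.sup' ⟨⟨0, I.n_pos⟩, Finset.mem_univ _⟩ fun i : Fin I.n => I.cost (I.bundle π i)

/-- The minimax (MMS) share of the instance: the minimum over all allocations
of the maximum bundle cost. -/
noncomputable def MMSshare : ℝ :=
  Finset.univ.inf' ⟨fun _ => ⟨0, I.n_pos⟩, Finset.mem_univ _⟩
    fun π : I.V → Fin I.n => I.maxCost π

/-- An allocation is MMS if every bundle costs at most the MMS share. -/
def IsMMS (π : I.V → Fin I.n) : Prop :=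
  ∀ i : Fin I.n, I.cost (I.bundle π i) ≤ I.MMSshare

/-- Pareto optimality: no allocation makes every agent weakly better off and
some agent strictly better off. -/
def ParetoOptimal (π : I.V → Fin I.n) : Prop :=
  ¬ ∃ π' : I.V → Fin I.n,
      (∀ i : Fin I.n, I.cost (I.bundle π' i) ≤ I.cost (I.bundle π i)) ∧
      ∃ j : Fin I.n, I.cost (I.bundle π' j) < I.cost (I.bundle π j)

/-- Utilitarian optimality: minimizes the sum of bundle costs. -/
def UtilitarianOptimal (π : I.V → Fin I.n) : Prop :=
  ∀ π' : I.V → Fin I.n, I.totalCost π ≤ I.totalCost π'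

/-- Egalitarian optimality: minimizes the maximum bundle cost. -/
def EgalitarianOptimal (π : I.V → Fin I.n) : Prop :=
  ∀ π' : I.V → Fin I.n, I.maxCost π ≤ I.maxCost π'

/-- Envy-freeness. -/
def EF (π : I.V → Fin I.n) : Prop :=
  ∀ i j : Fin I.n, I.cost (I.bundle π i) ≤ I.cost (I.bundle π j)

/-- Envy-freeness up to one order. -/
def EF1 (π : I.V → Fin I.n) : Prop :=
  ∀ i j : Fin I.n,
    I.bundle π i = ∅ ∨ ∃ v ∈ I.bundle π i, I.cost (I.bundle π i \ {v}) ≤ I.cost (I.bundle π j)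

end DeliveryInstance

/-!
Choose for every vertex `v` a leaf of the subtree rooted at `v`, and hand `v` to the agent who
already services that leaf. Leaves keep their agent, so the new allocation is non-wasteful. Every
order now serviced by an agent lies on the path from the hub to a leaf that this agent serviced
before, so no bundle requires a new edge.
-/

namespace DeliveryInstance

variable {I : DeliveryInstance}

section Ancestors

variable {u v x : I.V}

theorem Anc.refl (v : I.V) : I.Anc v v := ⟨0, rfl⟩

theorem anc_par (v : I.V) : I.Anc (I.par v) v := ⟨1, rfl⟩

theorem Anc.trans (huv : I.Anc u v) (hvx : I.Anc v x) : I.Anc u x := by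
  obtain ⟨a, rfl⟩ := huv
  obtain ⟨b, rfl⟩ := hvx
  exact ⟨a + b, Function.iterate_add_apply ..⟩

theorem Anc.eq_hub (h : I.Anc u I.hub) : u = I.hub := by
  obtain ⟨k, rfl⟩ := h
  exact Function.iterate_fixed I.par_hub k

theorem IsLeaf.eq_of_anc (hv : I.IsLeaf v) (h : I.Anc v x) : x = v := by
  obtain ⟨k, hk⟩ := h
  induction k with
  | zero => exact hk
  | succ k ih =>
    rw [Function.iterate_succ_apply'] at hk
    exact ih (hv _ hk)

end Ancestors

/-- The depth of a vertex: the number of edges on the path from the hub to it. -/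
def depth (I : DeliveryInstance) (v : I.V) : ℕ := Nat.find (I.reaches_hub v)

theorem depth_par_lt {v : I.V} (hv : v ≠ I.hub) : I.depth (I.par v) < I.depth v := by
  have hspec : I.par^[I.depth v] v = I.hub := Nat.find_spec (I.reaches_hub v)
  cases hd : I.depth v with
  | zero =>
    rw [hd] at hspec
    exact absurd hspec hv
  | succ k =>
    rw [hd, Function.iterate_succ_apply] at hspec
    exact Nat.lt_succ_of_le (Nat.find_min' _ hspec)

theorem exists_isLeaf_anc (v : I.V) : ∃ l : I.V, I.IsLeaf l ∧ I.Anc v l := by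
  obtain ⟨l, hvl, hmax⟩ :=
    Set.exists_max_image {x | I.Anc v x} I.depth (Set.toFinite _) ⟨v, Anc.refl v⟩
  refine ⟨l, fun u hu => ?_, hvl⟩
  subst hu
  by_contra hne
  have hu_hub : u ≠ I.hub := fun h => hne (by rw [h, I.par_hub])
  exact (hmax u (hvl.trans (anc_par u))).not_gt (depth_par_lt hu_hub)

/-- A chosen leaf of the subtree rooted at `v`, used to decide which agent takes over `v`; which
leaf is chosen is immaterial. -/
noncomputable def leafBelow (v : I.V) : I.V := (exists_isLeaf_anc v).choose

theorem isLeaf_leafBelow (v : I.V) : I.IsLeaf (leafBelow v) := (exists_isLeaf_anc v).choose_spec.1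

theorem anc_leafBelow (v : I.V) : I.Anc v (leafBelow v) := (exists_isLeaf_anc v).choose_spec.2

theorem IsLeaf.leafBelow_eq {l : I.V} (hl : I.IsLeaf l) : leafBelow l = l :=
  hl.eq_of_anc (anc_leafBelow l)

theorem leafBelow_ne_hub {v : I.V} (hv : v ≠ I.hub) : leafBelow v ≠ I.hub :=
  fun h => hv (h ▸ anc_leafBelow v).eq_hub

theorem cost_le_cost_of_forall_exists_anc {A B : Set I.V} (h : ∀ v ∈ A, ∃ x ∈ B, I.Anc v x) :
    I.cost A ≤ I.cost B := by
  refine Finset.sum_le_sum fun u _ => ?_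
  by_cases hu : u = I.hub
  · simp [hu]
  · refine Set.indicator_le_indicator_apply_of_subset ?_ (I.w_pos u hu).le
    rintro y ⟨hy, v, hvA, hyv⟩
    obtain ⟨x, hxB, hvx⟩ := h v hvA
    exact ⟨hy, x, hxB, hyv.trans hvx⟩

theorem nonWasteful_comp_leafBelow (π : I.V → Fin I.n) : I.NonWasteful (π ∘ leafBelow) :=
  fun v _ => ⟨leafBelow v, isLeaf_leafBelow v, anc_leafBelow v,
    congrArg π (isLeaf_leafBelow v).leafBelow_eq⟩

theorem cost_bundle_comp_leafBelow_le (π : I.V → Fin I.n) (i : Fin I.n) :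
    I.cost (I.bundle (π ∘ leafBelow) i) ≤ I.cost (I.bundle π i) :=
  cost_le_cost_of_forall_exists_anc fun v ⟨hv, hi⟩ =>
    ⟨leafBelow v, ⟨leafBelow_ne_hub hv, hi⟩, anc_leafBelow v⟩

theorem IsMMS.of_cost_le {π π' : I.V → Fin I.n} (hπ : I.IsMMS π)
    (h : ∀ i, I.cost (I.bundle π' i) ≤ I.cost (I.bundle π i)) : I.IsMMS π' :=
  fun i => (h i).trans (hπ i)

theorem exists_isMMS (I : DeliveryInstance) : ∃ π : I.V → Fin I.n, I.IsMMS π := by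
  obtain ⟨π, _, hπ⟩ : ∃ π ∈ Finset.univ, I.MMSshare = I.maxCost π :=
    Finset.exists_mem_eq_inf' _ I.maxCost
  refine ⟨π, fun i => ?_⟩
  rw [hπ]
  exact Finset.le_sup' (fun i => I.cost (I.bundle π i)) (Finset.mem_univ i)

end DeliveryInstance

open DeliveryInstance in
theorem stmt9_general (I : DeliveryInstance) :
    (∀ π : I.V → Fin I.n, ∃ π' : I.V → Fin I.n, I.NonWasteful π' ∧
      ∀ i : Fin I.n, I.cost (I.bundle π' i) ≤ I.cost (I.bundle π i)) ∧
    (∃ π : I.V → Fin I.n, I.IsMMS π ∧ I.NonWasteful π) := by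
  refine ⟨fun π => ⟨π ∘ leafBelow, nonWasteful_comp_leafBelow π,
    cost_bundle_comp_leafBelow_le π⟩, ?_⟩
  obtain ⟨π, hπ⟩ := I.exists_isMMS
  exact ⟨π ∘ leafBelow, hπ.of_cost_le (cost_bundle_comp_leafBelow_le π),
    nonWasteful_comp_leafBelow π⟩

/-- Every MMS allocation can be turned into an MMS and
non-wasteful allocation without increasing any agent's cost; in particular an
MMS and non-wasteful allocation always exists. -/
theorem stmt9 (I : DeliveryInstance) :
    (∀ π : I.V → Fin I.n, I.IsMMS π →
      ∃ π' : I.V → Fin I.n, I.IsMMS π' ∧ I.NonWasteful π' ∧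
        ∀ i : Fin I.n, I.cost (I.bundle π' i) ≤ I.cost (I.bundle π i)) ∧
    (∃ π : I.V → Fin I.n, I.IsMMS π ∧ I.NonWasteful π) := by
  obtain ⟨hdom, hex⟩ := stmt9_general I
  exact ⟨fun π hπ => (hdom π).imp fun _ ⟨hnw, hle⟩ => ⟨hπ.of_cost_le hle, hnw, hle⟩, hex⟩
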